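/- For every integer N ≥ 1, Q_BH⁻¹ · H_BH(1) · Q_BH = J; i.e. the exceptional-point Bose–Hubbard Hamiltonian H_BH(1) is similar, via the explicit transition matrix Q_BH, to the nilpotent Jordan block J. -/

import Mathlib

/-!
Let `e`, `f`, `h` be the raising, lowering and weight matrices of `sl₂` acting on binary forms of
degree `N - 1`, in a basis where all entries are integers. The diagonal matrix `D` turns `H_BH(1)`
into `-i(h - e + f)`. The Pascal matrix `L = (binom(m, q))` is `exp f`, so that
`L e L⁻¹ = e + [f, e] + [f, [f, e]] / 2 = e - h - f`. Since `P` is `L` with its rows reversed, and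
reversing the basis exchanges `e` with `f` and negates `h`, it follows that
`P⁻¹ (h - e + f) P = e`. Finally `G` rescales the weighted shift `-i e` to the Jordan block `J`.
-/

open Matrix Polynomial Finset

/-- off-diagonal coupling `√((N−1−k)(k+1))`. -/
noncomputable def gCoup (N k : ℕ) : ℝ := Real.sqrt (((N - 1 - k) * (k + 1) : ℕ))

/-- the non-Hermitian Bose–Hubbard Hamiltonian `H_BH(z)`. -/
noncomputable def HBH (N : ℕ) (z : ℂ) : Matrix (Fin N) (Fin N) ℂ :=
  fun k l =>
    if (k : ℕ) = (l : ℕ) then -Complex.I * (((N : ℤ) - 1 - 2 * (k : ℕ) : ℤ) : ℂ) * z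
    else if (l : ℕ) = (k : ℕ) + 1 then (gCoup N k : ℂ)
    else if (k : ℕ) = (l : ℕ) + 1 then (gCoup N l : ℂ)
    else 0

/-- the EP limit of the discrete anharmonic-oscillator Hamiltonian `H_AO`. -/
noncomputable def HAO (N : ℕ) : Matrix (Fin N) (Fin N) ℂ :=
  fun k l =>
    if (k : ℕ) = (l : ℕ) then -(((N : ℤ) - 1 - 2 * (k : ℕ) : ℤ) : ℂ)
    else if (l : ℕ) = (k : ℕ) + 1 then (gCoup N k : ℂ)
    else if (k : ℕ) = (l : ℕ) + 1 then -(gCoup N l : ℂ)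
    else 0

/-- the nilpotent Jordan block `J`. -/
noncomputable def Jmat (N : ℕ) : Matrix (Fin N) (Fin N) ℂ :=
  fun k l => if (l : ℕ) = (k : ℕ) + 1 then 1 else 0

/-- the Pascal-triangle matrix `P`. -/
noncomputable def Pmat (N : ℕ) : Matrix (Fin N) (Fin N) ℂ :=
  fun m q => ((N - 1 - (m : ℕ)).choose (q : ℕ) : ℂ)

/-- the diagonal factor `D` with `D_{k,k} = i^k·√(binom(N−1,k))`. -/
noncomputable def Dmat (N : ℕ) : Matrix (Fin N) (Fin N) ℂ :=
  Matrix.diagonal fun k => Complex.I ^ (k : ℕ) * (Real.sqrt ((N - 1).choose (k : ℕ)) : ℂ)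

/-- the diagonal factor `G` with `G_{k,k} = (−i)^{N−1−k}·(N−1−k)!`. -/
noncomputable def Gmat (N : ℕ) : Matrix (Fin N) (Fin N) ℂ :=
  Matrix.diagonal fun k => (-Complex.I) ^ (N - 1 - (k : ℕ)) * ((N - 1 - (k : ℕ)).factorial : ℂ)

/-- the Bose–Hubbard transition matrix `Q_BH = D·P·G`. -/
noncomputable def QBH (N : ℕ) : Matrix (Fin N) (Fin N) ℂ := Dmat N * Pmat N * Gmat N

/-- the diagonal factor `C` with `C_{k,k} = √(binom(N−1,k))`. -/
noncomputable def Cmat (N : ℕ) : Matrix (Fin N) (Fin N) ℂ :=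
  Matrix.diagonal fun k => (Real.sqrt ((N - 1).choose (k : ℕ)) : ℂ)

/-- the diagonal factor `F` with `F_{k,k} = (−1)^{N−1−k}·(N−1−k)!`. -/
noncomputable def Fmat (N : ℕ) : Matrix (Fin N) (Fin N) ℂ :=
  Matrix.diagonal fun k => (-1 : ℂ) ^ (N - 1 - (k : ℕ)) * ((N - 1 - (k : ℕ)).factorial : ℂ)

/-- the anharmonic-oscillator transition matrix `Q_AO = C·P·F`. -/
noncomputable def QAO (N : ℕ) : Matrix (Fin N) (Fin N) ℂ := Cmat N * Pmat N * Fmat N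

/-- `β = −1 + i`. -/
noncomputable def betaC : ℂ := -1 + Complex.I

/-- the diagonal factor `B` with `B_{k,k} = (−β)^{−k}`. -/
noncomputable def Bmat (N : ℕ) : Matrix (Fin N) (Fin N) ℂ :=
  Matrix.diagonal fun k => ((-betaC) ^ (k : ℕ))⁻¹

/-- the diagonal factor `A` with `A_{k,k} = β^k`. -/
noncomputable def Amat (N : ℕ) : Matrix (Fin N) (Fin N) ℂ :=
  Matrix.diagonal fun k => betaC ^ (k : ℕ)

/-- the upper-triangular real matrix `R` with
`R_{n,n+q} = √(binom(n+q,n)·binom(N−1−n,q))`. -/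
noncomputable def Rmat (N : ℕ) : Matrix (Fin N) (Fin N) ℂ :=
  fun n k =>
    if (n : ℕ) ≤ (k : ℕ) then
      (Real.sqrt (((k : ℕ).choose (n : ℕ)) * ((N - 1 - (n : ℕ)).choose ((k : ℕ) - (n : ℕ)))) : ℂ)
    else 0

/-- the transition-matrix product `S = B·R·A`. -/
noncomputable def Smat (N : ℕ) : Matrix (Fin N) (Fin N) ℂ := Bmat N * Rmat N * Amat N

/-- the discrete anharmonic-oscillator Hamiltonian `H_AO(γ)` with coupling parameter `γ`. -/
noncomputable def HAOg (N : ℕ) (γ : ℝ) : Matrix (Fin N) (Fin N) ℝ :=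
  fun k l =>
    if (k : ℕ) = (l : ℕ) then -((N : ℝ) - 1 - 2 * (k : ℕ))
    else if (l : ℕ) = (k : ℕ) + 1 then
      Real.sqrt ((((N - 1 - (k : ℕ)) * ((k : ℕ) + 1) : ℕ)) * (1 - γ))
    else if (k : ℕ) = (l : ℕ) + 1 then
      -Real.sqrt ((((N - 1 - (l : ℕ)) * ((l : ℕ) + 1) : ℕ)) * (1 - γ))
    else 0

/-- the exchange (parity) matrix `Π`. -/
noncomputable def PiMat (N : ℕ) : Matrix (Fin N) (Fin N) ℂ :=
  fun k l => if (k : ℕ) + (l : ℕ) = N - 1 then 1 else 0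

section SqrtWeights

theorem sqrt_mul_mul_sqrt {a b x y : ℝ} (ha : 0 ≤ a) (hx : 0 ≤ x) (h : b * x = a * y) :
    √(a * b) * √x = a * √y := by
  calc √(a * b) * √x = √(a ^ 2 * y) := by
        rw [← Real.sqrt_mul' _ hx, mul_assoc, h, ← mul_assoc, sq]
    _ = a * √y := by rw [Real.sqrt_mul (sq_nonneg a), Real.sqrt_sq ha]

theorem gCoup_mul_sqrt_choose_succ (N k : ℕ) :
    gCoup N k * √((N - 1).choose (k + 1)) = (N - 1 - k : ℕ) * √((N - 1).choose k) := by
  rw [gCoup, Nat.cast_mul]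
  refine sqrt_mul_mul_sqrt (Nat.cast_nonneg _) (Nat.cast_nonneg _) ?_
  rw [mul_comm, mul_comm ((N - 1 - k : ℕ) : ℝ)]
  exact_mod_cast Nat.choose_succ_right_eq (N - 1) k

theorem gCoup_mul_sqrt_choose (N k : ℕ) :
    gCoup N k * √((N - 1).choose k) = (k + 1 : ℕ) * √((N - 1).choose (k + 1)) := by
  rw [gCoup, mul_comm (N - 1 - k), Nat.cast_mul]
  refine sqrt_mul_mul_sqrt (Nat.cast_nonneg _) (Nat.cast_nonneg _) ?_
  rw [mul_comm, mul_comm ((k + 1 : ℕ) : ℝ)]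
  exact_mod_cast (Nat.choose_succ_right_eq (N - 1) k).symm

end SqrtWeights

section Binomial

theorem cast_mul_choose_succ (R : Type*) [NonAssocSemiring R] (m r : ℕ) :
    (m : R) * m.choose (r + 1) = m * (m - 1).choose r + m * (m - 1).choose (r + 1) := by
  cases m with
  | zero => simp
  | succ m => rw [Nat.choose_succ_succ', Nat.add_sub_cancel, Nat.cast_add (m.choose r), mul_add]

variable (R : Type*) [CommRing R]

theorem cast_sub_mul_choose (m r : ℕ) :
    ((m : R) - r) * m.choose r = (r + 1) * m.choose (r + 1) := by
  rcases le_or_gt r m with hr | hr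
  · have h : (m.choose (r + 1) * (r + 1) : R) = m.choose r * (m - r : ℕ) :=
      mod_cast congrArg (Nat.cast (R := R)) (Nat.choose_succ_right_eq m r)
    rw [Nat.cast_sub hr] at h
    linear_combination -h
  · simp [Nat.choose_eq_zero_of_lt hr, Nat.choose_eq_zero_of_lt (hr.trans r.lt_succ_self)]

theorem cast_mul_choose_pred (m r : ℕ) :
    (m : R) * (m - 1).choose r = (m - r) * m.choose r := by
  rw [cast_sub_mul_choose]
  cases m with
  | zero => simp
  | succ m =>
    rw [mul_comm ((r : R) + 1)]
    exact mod_cast congrArg (Nat.cast (R := R)) (Nat.add_one_mul_choose_eq m r)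

end Binomial

section Sl2

variable (R : Type*) [CommRing R] (N : ℕ)

/-- The weight matrix `h` of `sl₂` acting on binary forms of degree `n = N - 1`, in the basis
`binom(n, k) x^(n-k) y^k`, for which `sl2Raising` and `sl2Lowering` have integer entries. -/
def sl2Weight : Matrix (Fin N) (Fin N) R :=
  diagonal fun k => (N : R) - 1 - 2 * (k : ℕ)

/-- The raising matrix `e = x ∂/∂y` of `sl₂` acting on binary forms of degree `N - 1`, in the basis
of `sl2Weight`. -/
def sl2Raising : Matrix (Fin N) (Fin N) R :=
  of fun k l => if (l : ℕ) = k + 1 then (N : R) - 1 - (k : ℕ) else 0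

/-- The lowering matrix `f = y ∂/∂x` of `sl₂` acting on binary forms of degree `N - 1`, in the basis
of `sl2Weight`. -/
def sl2Lowering : Matrix (Fin N) (Fin N) R :=
  of fun k l => if (k : ℕ) = l + 1 then ((k : ℕ) : R) else 0

/-- The lower unitriangular Pascal matrix; `Pmat` is obtained from it by reversing the rows. -/
def pascalMatrix : Matrix (Fin N) (Fin N) R :=
  of fun m q => ((m : ℕ).choose q : R)

variable {N}

theorem cast_val_rev (k : Fin N) : ((Fin.rev k : ℕ) : R) = N - 1 - (k : ℕ) := by
  rw [Fin.val_rev, Nat.cast_sub k.is_lt, Nat.cast_add_one]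
  ring

variable (N)

theorem sl2Weight_submatrix_rev :
    (sl2Weight R N).submatrix Fin.revPerm Fin.revPerm = -sl2Weight R N := by
  rw [sl2Weight, submatrix_diagonal_equiv, diagonal_neg]
  congr 1
  ext k
  simp only [Function.comp_apply, Fin.revPerm_apply, cast_val_rev]
  ring

theorem sl2Raising_submatrix_rev :
    (sl2Raising R N).submatrix Fin.revPerm Fin.revPerm = sl2Lowering R N := by
  ext k l
  have hkl : ((Fin.rev l : ℕ) = Fin.rev k + 1) ↔ (k : ℕ) = l + 1 := by
    simp only [Fin.val_rev]
    omega
  simp only [sl2Raising, sl2Lowering, submatrix_apply, of_apply, Fin.revPerm_apply, hkl,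
    cast_val_rev, sub_sub_cancel]

theorem sl2Lowering_submatrix_rev :
    (sl2Lowering R N).submatrix Fin.revPerm Fin.revPerm = sl2Raising R N := by
  rw [← sl2Raising_submatrix_rev]
  ext k l
  simp

variable {R N}

theorem sum_sl2Raising_mul (f : ℕ → R) (k : Fin N) :
    ∑ l, sl2Raising R N k l * f l = ((N : R) - 1 - (k : ℕ)) * f (k + 1) := by
  simp only [sl2Raising, of_apply, ite_mul, zero_mul]
  by_cases hk : (k : ℕ) + 1 < N
  · rw [Fintype.sum_eq_single ⟨k + 1, hk⟩ fun l hl => if_neg (mt Fin.ext hl), if_pos rfl]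
  · have hN : (N : R) = (k : ℕ) + 1 := mod_cast congrArg (Nat.cast (R := R)) (by omega : N = k + 1)
    rw [Finset.sum_eq_zero fun l _ => if_neg (by omega), hN]
    ring

theorem sum_sl2Lowering_mul (f : ℕ → R) (k : Fin N) :
    ∑ l, sl2Lowering R N k l * f l = (k : ℕ) * f (k - 1) := by
  simp only [sl2Lowering, of_apply, ite_mul, zero_mul]
  obtain ⟨_ | k, hk⟩ := k
  · simp
  · rw [Fintype.sum_eq_single ⟨k, by omega⟩ fun l hl => if_neg fun h => hl (Fin.ext (by grind)),
      if_pos rfl, Nat.add_sub_cancel]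

theorem sum_mul_sl2Raising (f : ℕ → R) (q : Fin N) :
    ∑ l : Fin N, f l * sl2Raising R N l q =
      if (q : ℕ) = 0 then 0 else f (q - 1) * ((N : R) - (q : ℕ)) := by
  simp only [sl2Raising, of_apply, mul_ite, mul_zero]
  obtain ⟨_ | q, hq⟩ := q
  · simp
  · rw [Fintype.sum_eq_single ⟨q, by omega⟩ fun l hl => if_neg fun h => hl (Fin.ext (by grind)),
      if_pos rfl, if_neg q.succ_ne_zero, Nat.add_sub_cancel]
    push_cast
    ring

variable (R N)

theorem sl2_mul_pascalMatrix :
    (sl2Raising R N - sl2Weight R N - sl2Lowering R N) * pascalMatrix R N =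
      pascalMatrix R N * sl2Raising R N := by
  ext m q
  have hraise := sum_sl2Raising_mul (fun l => (l.choose q : R)) m
  have hlower := sum_sl2Lowering_mul (fun l => (l.choose q : R)) m
  have hshift := sum_mul_sl2Raising (fun l => ((m : ℕ).choose l : R)) q
  rw [Matrix.sub_mul, Matrix.sub_mul, Matrix.sub_apply, Matrix.sub_apply, sl2Weight, diagonal_mul]
  simp only [mul_apply, pascalMatrix, of_apply, hraise, hlower, hshift]
  rcases (q : ℕ) with _ | r
  · simp only [Nat.choose_zero_right, if_pos]
    push_cast
    ring
  · rw [if_neg r.succ_ne_zero, Nat.add_sub_cancel, Nat.choose_succ_succ']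
    push_cast
    linear_combination cast_mul_choose_succ R m r + cast_mul_choose_pred R m r

theorem isUnit_pascalMatrix : IsUnit (pascalMatrix R N) := by
  have htri : (pascalMatrix R N).IsLowerTriangular := fun i j hij => by
    have hlt : (i : ℕ) < j := hij
    simp [pascalMatrix, Nat.choose_eq_zero_of_lt hlt]
  rw [isUnit_iff_isUnit_det, det_of_isLowerTriangular _ htri]
  simp [pascalMatrix]

end Sl2

section Transition

variable (N : ℕ)

theorem Pmat_eq_submatrix : Pmat N = (pascalMatrix ℂ N).submatrix Fin.revPerm id := by
  ext m q
  have hrev : (Fin.rev m : ℕ) = N - 1 - m := by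
    rw [Fin.val_rev]
    omega
  simp only [Pmat, pascalMatrix, submatrix_apply, of_apply, Fin.revPerm_apply, hrev, id_eq]

theorem sl2_mul_Pmat :
    (sl2Weight ℂ N - sl2Raising ℂ N + sl2Lowering ℂ N) * Pmat N = Pmat N * sl2Raising ℂ N := by
  have hrev : sl2Weight ℂ N - sl2Raising ℂ N + sl2Lowering ℂ N =
      (sl2Raising ℂ N - sl2Weight ℂ N - sl2Lowering ℂ N).submatrix Fin.revPerm Fin.revPerm := by
    rw [submatrix_sub, submatrix_sub]
    simp only [Pi.sub_apply, sl2Raising_submatrix_rev, sl2Weight_submatrix_rev,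
      sl2Lowering_submatrix_rev]
    abel
  rw [hrev, Pmat_eq_submatrix, submatrix_mul_equiv, sl2_mul_pascalMatrix]
  rfl

theorem HBH_mul_Dmat (z : ℂ) :
    HBH N z * Dmat N =
      Dmat N * (-Complex.I • (z • sl2Weight ℂ N - sl2Raising ℂ N + sl2Lowering ℂ N)) := by
  ext k l
  simp only [Dmat, mul_diagonal, diagonal_mul, HBH, Matrix.smul_apply, Matrix.add_apply,
    Matrix.sub_apply, sl2Weight, sl2Raising, sl2Lowering, of_apply, diagonal_apply, smul_eq_mul,
    Fin.ext_iff]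
  by_cases hdiag : (k : ℕ) = l
  · obtain rfl := Fin.ext hdiag
    rw [if_pos rfl, if_pos rfl, if_neg (k : ℕ).succ_ne_self.symm, if_neg (k : ℕ).succ_ne_self.symm]
    push_cast
    ring
  by_cases hup : (l : ℕ) = k + 1
  · have hsqrt := congrArg Complex.ofReal (gCoup_mul_sqrt_choose_succ N k)
    have hcast : ((N - 1 - k : ℕ) : ℂ) = N - 1 - (k : ℕ) := by
      rw [Nat.cast_sub (by omega), Nat.cast_sub (by omega), Nat.cast_one]
    push_cast [hcast] at hsqrt
    simp only [if_neg hdiag, if_pos hup, if_neg (show ¬(k : ℕ) = l + 1 by omega)]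
    rw [hup, pow_succ]
    linear_combination Complex.I ^ (k : ℕ) * Complex.I * hsqrt
  by_cases hdown : (k : ℕ) = l + 1
  · have hsqrt := congrArg Complex.ofReal (gCoup_mul_sqrt_choose N l)
    push_cast at hsqrt
    simp only [if_neg hdiag, if_neg hup, if_pos hdown]
    rw [hdown, pow_succ]
    push_cast
    linear_combination Complex.I ^ (l : ℕ) * hsqrt +
      Complex.I ^ (l : ℕ) * ((l : ℕ) + 1) * √((N - 1).choose (l + 1)) * Complex.I_mul_I
  · simp only [if_neg hdiag, if_neg hup, if_neg hdown]
    ring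

theorem sl2Raising_mul_Gmat :
    (-Complex.I • sl2Raising ℂ N) * Gmat N = Gmat N * Jmat N := by
  ext k l
  simp only [Gmat, mul_diagonal, diagonal_mul, Matrix.smul_apply, smul_eq_mul, sl2Raising, of_apply,
    Jmat]
  by_cases hkl : (l : ℕ) = k + 1
  · obtain ⟨j, hj⟩ : ∃ j, N = k + 1 + j + 1 := ⟨N - 1 - (k + 1), by omega⟩
    have hk : N - 1 - k = j + 1 := by omega
    have hl : N - 1 - l = j := by omega
    have hcast : (N : ℂ) - 1 - (k : ℕ) = j + 1 := by
      have hN : (N : ℂ) = (k : ℕ) + 1 + j + 1 := mod_cast congrArg (Nat.cast (R := ℂ)) hj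
      rw [hN]
      ring
    rw [if_pos hkl, if_pos hkl, hk, hl, hcast, pow_succ, Nat.factorial_succ]
    push_cast
    ring
  · simp [hkl]

theorem HBH_one_mul_QBH : HBH N 1 * QBH N = QBH N * Jmat N := by
  calc HBH N 1 * QBH N
      = HBH N 1 * Dmat N * Pmat N * Gmat N := by simp only [QBH, Matrix.mul_assoc]
    _ = Dmat N * (-Complex.I • ((sl2Weight ℂ N - sl2Raising ℂ N + sl2Lowering ℂ N) *
          Pmat N)) * Gmat N := by
        rw [HBH_mul_Dmat, one_smul, Matrix.mul_assoc (Dmat N), Matrix.smul_mul]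
    _ = Dmat N * Pmat N * ((-Complex.I • sl2Raising ℂ N) * Gmat N) := by
        rw [sl2_mul_Pmat, ← Matrix.mul_smul]
        simp only [Matrix.mul_assoc]
    _ = QBH N * Jmat N := by rw [sl2Raising_mul_Gmat, QBH, Matrix.mul_assoc _ (Gmat N)]

theorem isUnit_Dmat : IsUnit (Dmat N) := by
  refine isUnit_diagonal.2 (Pi.isUnit_iff.2 fun k => isUnit_iff_ne_zero.2 ?_)
  have hchoose : 0 < (N - 1).choose k := Nat.choose_pos (by omega)
  have hsqrt : √((N - 1).choose k) ≠ 0 := Real.sqrt_ne_zero'.2 (Nat.cast_pos.2 hchoose)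
  exact mul_ne_zero (pow_ne_zero _ Complex.I_ne_zero) (Complex.ofReal_ne_zero.2 hsqrt)

theorem isUnit_Pmat : IsUnit (Pmat N) := by
  rw [Pmat_eq_submatrix]
  exact (isUnit_submatrix_equiv Fin.revPerm (Equiv.refl _)).2 (isUnit_pascalMatrix ℂ N)

theorem isUnit_Gmat : IsUnit (Gmat N) :=
  isUnit_diagonal.2 <| Pi.isUnit_iff.2 fun _ => isUnit_iff_ne_zero.2 <|
    mul_ne_zero (pow_ne_zero _ (neg_ne_zero.2 Complex.I_ne_zero))
      (Nat.cast_ne_zero.2 (Nat.factorial_ne_zero _))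

theorem isUnit_QBH : IsUnit (QBH N) :=
  ((isUnit_Dmat N).mul (isUnit_Pmat N)).mul (isUnit_Gmat N)

end Transition

/-- `Q_BH⁻¹ · H_BH(1) · Q_BH = J`. -/
theorem bh_jordan_form (N : ℕ) (hN : 1 ≤ N) :
    (QBH N)⁻¹ * HBH N 1 * QBH N = Jmat N := by
  rw [Matrix.mul_assoc, HBH_one_mul_QBH]
  exact nonsing_inv_mul_cancel_left _ _ ((isUnit_iff_isUnit_det _).1 (isUnit_QBH N))
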